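/- Kostant's cubic Dirac operator is 𝔥-equivariant: for every Z ∈ 𝔥, ρ(Z)·D_{𝔤/𝔥} = D_{𝔤/𝔥}·ρ(Z) in A = U(𝔤) ⊗ Cl(𝔤), where ρ(Z) = ιU(Z) ⊗ 1 + 1 ⊗ ads(Z) and ads is the spin lift of the adjoint action of 𝔤 built from the combined basis. -/

import Mathlib

open CliffordAlgebra TensorProduct

/-!
The commutator with `ρ(Z)` acts on the generators of `A` as `ad Z`, because the spin lift satisfies
`[ads Z, ι w] = ι [Z, w]`. If `B` is invariant and `Z` normalises `𝔥`, then `ad Z` is a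
skew-adjoint operator which preserves `𝔭`, so it annihilates the canonical element
`∑ Y_i ⊗ Y*_i ∈ 𝔭 ⊗ 𝔭`; the quadratic part of the Dirac operator is the image of this element.
The inner sum of `γ_𝔭` is the quadratic Clifford element of the operator `π_𝔭 ∘ ad Y_i`, which
depends `ad Z`-equivariantly on `Y_i`, so `γ_𝔭` is again an image of the canonical element.
-/

section DualFrames

variable {k V : Type*} [CommRing k] [AddCommGroup V] [Module k V]
  {B : LinearMap.BilinForm k V} {W : Submodule k V}
  {I : Type*} [Fintype I] {y yd : I → V} {S : Module.End k V}

/-- Families `y`, `yd` in `W` that reproduce `W` through the form `B`. A basis of `W` together with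
its `B`-dual basis is the main example, but linear independence is not required. Only the
expansion in `y` is recorded: for symmetric `B` it implies the expansion in `yd`. -/
structure IsDualFrame (B : LinearMap.BilinForm k V) (W : Submodule k V) (y yd : I → V) :
    Prop where
  mem : ∀ i, y i ∈ W
  dual_mem : ∀ i, yd i ∈ W
  sum_smul : ∀ w ∈ W, ∑ i, B (yd i) w • y i = w

namespace IsDualFrame

theorem symm (h : IsDualFrame B W y yd) (hB : B.IsSymm) : IsDualFrame B W yd y where
  mem := h.dual_mem
  dual_mem := h.mem
  sum_smul w hw := by
    set w' := ∑ i, B (y i) w • yd i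
    have hw' : w' ∈ W := W.sum_mem fun i _ => W.smul_mem _ (h.dual_mem i)
    have pairing_eq : ∀ z ∈ W, B z w' = B z w := fun z hz => by
      conv_rhs => rw [← h.sum_smul z hz]
      simp only [w', map_sum, map_smul, LinearMap.sum_apply, LinearMap.smul_apply, smul_eq_mul,
        hB.eq z, mul_comm]
    rw [← h.sum_smul w' hw', ← h.sum_smul w hw]
    exact Finset.sum_congr rfl fun i _ => by rw [pairing_eq _ (h.dual_mem i)]

theorem of_span_eq_top [DecidableEq I]
    (hdual : ∀ i j, B (yd i) (y j) = if i = j then 1 else 0)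
    (hspan : Submodule.span k (Set.range y) = ⊤) : IsDualFrame B ⊤ y yd where
  mem _ := Submodule.mem_top
  dual_mem _ := Submodule.mem_top
  sum_smul w _ := by
    obtain ⟨c, rfl⟩ := (Submodule.mem_span_range_iff_exists_fun k).1
      (hspan ▸ Submodule.mem_top : w ∈ Submodule.span k (Set.range y))
    simp only [map_sum, map_smul, hdual, smul_eq_mul, mul_ite, mul_one, mul_zero,
      Finset.sum_ite_eq, Finset.mem_univ, if_true]

theorem of_sumElim {J : Type*} [Fintype J] {x xd : J → V}
    (h : IsDualFrame B ⊤ (Sum.elim x y) (Sum.elim xd yd)) (hy : ∀ i, y i ∈ W)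
    (hyd : ∀ i, yd i ∈ W) (horth : ∀ j, ∀ w ∈ W, B (xd j) w = 0) : IsDualFrame B W y yd where
  mem := hy
  dual_mem := hyd
  sum_smul w hw := by
    simpa [Fintype.sum_sum_type, horth _ w hw] using h.sum_smul w Submodule.mem_top

/-- The canonical element `∑ y i ⊗ yd i` is killed by `S`, tested on a bilinear map. -/
theorem sum_apply_add_sum_apply_eq_zero {M : Type*} [AddCommGroup M] [Module k M]
    (h : IsDualFrame B W y yd) (hB : B.IsSymm) (hS : B.IsSkewAdjoint S)
    (hW : W ∈ S.invtSubmodule) (f : V →ₗ[k] V →ₗ[k] M) :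
    ∑ i, f (S (y i)) (yd i) + ∑ i, f (y i) (S (yd i)) = 0 := by
  have expand_left : ∑ i, f (S (y i)) (yd i) = ∑ i, ∑ j, B (yd j) (S (y i)) • f (y j) (yd i) :=
    Finset.sum_congr rfl fun i _ => by
      conv_lhs => rw [← h.sum_smul _ (hW (h.mem i))]
      simp only [map_sum, map_smul, LinearMap.sum_apply, LinearMap.smul_apply]
  have expand_right : ∑ i, f (y i) (S (yd i)) = ∑ i, ∑ j, B (y j) (S (yd i)) • f (y i) (yd j) :=
    Finset.sum_congr rfl fun i _ => by
      conv_lhs => rw [← (h.symm hB).sum_smul _ (hW (h.dual_mem i))]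
      simp only [map_sum, map_smul]
  have skew : ∀ i j, B (y j) (S (yd i)) = -B (yd i) (S (y j)) := fun i j => by
    rw [← hB.eq, hS, Pi.neg_apply, map_neg]
  rw [expand_left, expand_right, Finset.sum_comm]
  simp only [skew, neg_smul, Finset.sum_neg_distrib, add_neg_cancel]

end IsDualFrame

theorem orthogonal_mem_invtSubmodule_of_isSkewAdjoint (hS : B.IsSkewAdjoint S)
    (hW : W ∈ S.invtSubmodule) : B.orthogonal W ∈ S.invtSubmodule := fun v hv w hw => by
  have : B (S w) v = 0 := hv _ (hW hw)
  rwa [hS, Pi.neg_apply, map_neg, neg_eq_zero] at this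

theorem commute_of_mem_invtSubmodule {U : Submodule k V} {p : Module.End k V}
    (hUW : Codisjoint U W) (hpU : ∀ u ∈ U, p u = 0) (hpW : ∀ w ∈ W, p w = w)
    (hU : U ∈ S.invtSubmodule) (hW : W ∈ S.invtSubmodule) : Commute S p :=
  LinearMap.ext_on_codisjoint hUW
    (fun u hu => by simp [hpU u hu, hpU _ (hU hu)])
    (fun w hw => by simp [hpW w hw, hpW _ (hW hw)])

end DualFrames

section Commutators

attribute [local instance] LieRing.ofAssociativeRing

theorem ring_lie_mul {A : Type*} [Ring A] (a b c : A) : ⁅a, b * c⁆ = ⁅a, b⁆ * c + b * ⁅a, c⁆ := by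
  simp only [LieRing.of_associative_ring_bracket]
  noncomm_ring

section Clifford

variable {k V : Type*} [CommRing k] [AddCommGroup V] [Module k V]
  {B : LinearMap.BilinForm k V} {W : Submodule k V}
  {I : Type*} [Fintype I] {y yd : I → V} {S : Module.End k V}

theorem IsDualFrame.lie_sum_mul {A : Type*} [Ring A] [Algebra k A]
    (h : IsDualFrame B W y yd) (hB : B.IsSymm) (hS : B.IsSkewAdjoint S)
    (hW : W ∈ S.invtSubmodule) {a : A} {φ : V →ₗ[k] A} (hφ : ∀ v, ⁅a, φ v⁆ = φ (S v))
    (ψ : V →ₗ[k] A) :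
    ⁅a, ∑ i, φ (y i) * ψ (yd i)⁆ = ∑ i, φ (y i) * (⁅a, ψ (yd i)⁆ - ψ (S (yd i))) := by
  have invariance : ∑ i, φ (S (y i)) * ψ (yd i) = -∑ i, φ (y i) * ψ (S (yd i)) :=
    eq_neg_of_add_eq_zero_left <|
      h.sum_apply_add_sum_apply_eq_zero hB hS hW ((LinearMap.mul k A).compl₁₂ φ ψ)
  simp only [lie_sum, ring_lie_mul, hφ, mul_sub, Finset.sum_add_distrib, Finset.sum_sub_distrib,
    invariance]
  abel

theorem IsDualFrame.lie_sum_mul_eq_zero {A : Type*} [Ring A] [Algebra k A]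
    (h : IsDualFrame B W y yd) (hB : B.IsSymm) (hS : B.IsSkewAdjoint S)
    (hW : W ∈ S.invtSubmodule) {a : A} {φ ψ : V →ₗ[k] A} (hφ : ∀ v, ⁅a, φ v⁆ = φ (S v))
    (hψ : ∀ v, ⁅a, ψ v⁆ = ψ (S v)) : ⁅a, ∑ i, φ (y i) * ψ (yd i)⁆ = 0 := by
  simp only [h.lie_sum_mul hB hS hW hφ ψ, hψ, sub_self, mul_zero, Finset.sum_const_zero]

theorem clifford_lie_ι_mul_ι (Q : QuadraticForm k V) (u v w : V) :
    ⁅ι Q u * ι Q v, ι Q w⁆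
      = QuadraticMap.polar Q v w • ι Q u - QuadraticMap.polar Q u w • ι Q v := by
  calc ⁅ι Q u * ι Q v, ι Q w⁆
      = ι Q u * (ι Q v * ι Q w + ι Q w * ι Q v) - (ι Q u * ι Q w + ι Q w * ι Q u) * ι Q v := by
        rw [LieRing.of_associative_ring_bracket]
        noncomm_ring
    _ = _ := by
        rw [ι_mul_ι_add_swap, ι_mul_ι_add_swap, ← Algebra.commutes, ← Algebra.smul_def,
          ← Algebra.smul_def]

/-- The quadratic Clifford element `∑ i, yd i * T (y i)` of an operator `T`. In a frame of the whole
space and for skew-adjoint `T` it is `-4` times the spin lift of `T`. -/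
def cliffordOfEnd (Q : QuadraticForm k V) (y yd : I → V) :
    Module.End k V →ₗ[k] CliffordAlgebra Q :=
  ∑ i, LinearMap.mulLeft k (ι Q (yd i)) ∘ₗ ι Q ∘ₗ LinearMap.applyₗ (y i)

theorem cliffordOfEnd_apply (Q : QuadraticForm k V) (y yd : I → V) (T : Module.End k V) :
    cliffordOfEnd Q y yd T = ∑ i, ι Q (yd i) * ι Q (T (y i)) := by
  simp [cliffordOfEnd]

variable {Q : QuadraticForm k V}

theorem IsDualFrame.lie_cliffordOfEnd_ι (h : IsDualFrame B ⊤ y yd) (hB : B.IsSymm)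
    (hQ : ∀ v, Q v = B v v) {T : Module.End k V} (hT : B.IsSkewAdjoint T) (w : V) :
    ⁅cliffordOfEnd Q y yd T, ι Q w⁆ = (-4 : k) • ι Q (T w) := by
  have polar_eq : ∀ u v, QuadraticMap.polar Q u v = 2 * B u v := fun u v => by
    simp only [QuadraticMap.polar, hQ, map_add, LinearMap.add_apply, hB.eq v u]
    ring
  have sum_dual : ∑ i, B (T (y i)) w • ι Q (yd i) = -ι Q (T w) := by
    rw [← (h.symm hB).sum_smul (T w) Submodule.mem_top]
    simp only [map_sum, map_smul, hT (y _) w, Pi.neg_apply, map_neg, neg_smul,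
      Finset.sum_neg_distrib]
  have sum_frame : ∑ i, B (yd i) w • ι Q (T (y i)) = ι Q (T w) := by
    conv_rhs => rw [← h.sum_smul w Submodule.mem_top]
    simp only [map_sum, map_smul]
  simp only [cliffordOfEnd_apply, sum_lie, clifford_lie_ι_mul_ι, polar_eq, mul_smul,
    Finset.sum_sub_distrib, ← Finset.smul_sum, sum_dual, sum_frame]
  module

theorem IsDualFrame.lie_cliffordOfEnd (h : IsDualFrame B W y yd) (hB : B.IsSymm)
    (hS : B.IsSkewAdjoint S) (hW : W ∈ S.invtSubmodule) {a : CliffordAlgebra Q}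
    (ha : ∀ v, ⁅a, ι Q v⁆ = ι Q (S v)) (T : Module.End k V) :
    ⁅a, cliffordOfEnd Q y yd T⁆ = cliffordOfEnd Q y yd ⁅S, T⁆ := by
  have lie_apply : ∀ v, ⁅S, T⁆ v = S (T v) - T (S v) := fun _ => rfl
  simpa only [cliffordOfEnd_apply, lie_apply, LinearMap.comp_apply, ha, map_sub] using
    (h.symm hB).lie_sum_mul hB hS hW ha (ι Q ∘ₗ T)

end Clifford

section Dirac

variable {k g : Type*} [CommRing k] [LieRing g] [LieAlgebra k g]
  {B : LinearMap.BilinForm k g} {W : Submodule k g}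
  {I : Type*} [Fintype I] {y yd : I → g} {Q : QuadraticForm k g} {Z : g}

theorem lieInvariant_of_apply_lie_eq (h : ∀ X Y Z : g, B ⁅X, Y⁆ Z = B X ⁅Y, Z⁆) :
    B.lieInvariant g := fun X Y Z => by
  rw [← h, ← lie_skew, map_neg, LinearMap.neg_apply]

theorem isSkewAdjoint_ad (hinv : B.lieInvariant g) (Z : g) :
    B.IsSkewAdjoint (LieAlgebra.ad k g Z) := fun X Y => by
  rw [LieAlgebra.ad_apply, hinv, Pi.neg_apply, map_neg, LieAlgebra.ad_apply]

/-- The spin lift `ads` of the adjoint action, computed in the frame `y`, `yd`. -/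
def spinLift [Invertible (4 : k)] (Q : QuadraticForm k g) (y yd : I → g) (X : g) :
    CliffordAlgebra Q :=
  (-⅟(4 : k)) • cliffordOfEnd Q y yd (LieAlgebra.ad k g X)

theorem IsDualFrame.lie_spinLift_ι [Invertible (4 : k)] (h : IsDualFrame B ⊤ y yd)
    (hB : B.IsSymm) (hinv : B.lieInvariant g) (hQ : ∀ X, Q X = B X X) (Z w : g) :
    ⁅spinLift Q y yd Z, ι Q w⁆ = ι Q ⁅Z, w⁆ := by
  rw [spinLift, smul_lie, h.lie_cliffordOfEnd_ι hB hQ (isSkewAdjoint_ad hinv Z), smul_smul,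
    neg_mul_neg, invOf_mul_self, one_smul, LieAlgebra.ad_apply]

/-- The cubic Clifford element `∑ i j, yd i * yd j * p ⁅y i, y j⁆`, which for `p = π_𝔭` is `-24`
times Kostant's `γ_𝔭`. -/
def cubicElement (Q : QuadraticForm k g) (y yd : I → g) (p : Module.End k g) :
    CliffordAlgebra Q :=
  ∑ i, ι Q (yd i) * cliffordOfEnd Q y yd (p * LieAlgebra.ad k g (y i))

theorem cubicElement_eq_sum (Q : QuadraticForm k g) (y yd : I → g) (p : Module.End k g) :
    cubicElement Q y yd p = ∑ i, ∑ j, ι Q (yd i) * ι Q (yd j) * ι Q (p ⁅y i, y j⁆) := by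
  simp only [cubicElement, cliffordOfEnd_apply, Finset.mul_sum, mul_assoc, Module.End.mul_apply,
    LieAlgebra.ad_apply]

theorem IsDualFrame.lie_cubicElement (h : IsDualFrame B W y yd) (hB : B.IsSymm)
    (hinv : B.lieInvariant g) (hW : W ∈ (LieAlgebra.ad k g Z).invtSubmodule)
    {p : Module.End k g} (hp : Commute (LieAlgebra.ad k g Z) p) {s : CliffordAlgebra Q}
    (hs : ∀ X, ⁅s, ι Q X⁆ = ι Q ⁅Z, X⁆) :
    ⁅s, cubicElement Q y yd p⁆ = 0 := by
  have hZ := isSkewAdjoint_ad hinv Z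
  let ψ : g →ₗ[k] CliffordAlgebra Q :=
    cliffordOfEnd Q y yd ∘ₗ LinearMap.mulLeft k p ∘ₗ (LieAlgebra.ad k g : g →ₗ[k] _)
  have hψ : ∀ X, ⁅s, ψ X⁆ = ψ ⁅Z, X⁆ := fun X => by
    change ⁅s, cliffordOfEnd Q y yd (p * LieAlgebra.ad k g X)⁆
      = cliffordOfEnd Q y yd (p * LieAlgebra.ad k g ⁅Z, X⁆)
    rw [h.lie_cliffordOfEnd hB hZ hW hs, ring_lie_mul, hp.lie_eq, zero_mul, zero_add,
      LieHom.map_lie]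
  have cubic_eq : cubicElement Q y yd p = ∑ i, ι Q (yd i) * ψ (y i) := rfl
  rw [cubic_eq]
  exact (h.symm hB).lie_sum_mul_eq_zero hB hZ hW hs hψ

/-- The diagonal element of `U(𝔤) ⊗ Cl(𝔤)`; for `s = ads X` it is `ρ(X)`. The spin part `s` is kept
free because only its commutators with the generators of `Cl(𝔤)` matter. -/
def diagonalElement (X : g) (s : CliffordAlgebra Q) :
    UniversalEnvelopingAlgebra k g ⊗[k] CliffordAlgebra Q :=
  UniversalEnvelopingAlgebra.ι k X ⊗ₜ 1 + 1 ⊗ₜ s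

theorem lie_diagonalElement_ι_tmul_one (s : CliffordAlgebra Q) (X : g) :
    ⁅diagonalElement Z s, UniversalEnvelopingAlgebra.ι k X ⊗ₜ[k] (1 : CliffordAlgebra Q)⁆
      = UniversalEnvelopingAlgebra.ι k ⁅Z, X⁆ ⊗ₜ[k] 1 := by
  simp only [diagonalElement, LieHom.map_lie, LieRing.of_associative_ring_bracket, add_mul,
    mul_add, Algebra.TensorProduct.tmul_mul_tmul, mul_one, one_mul, sub_tmul]
  abel

theorem lie_diagonalElement_one_tmul (s c : CliffordAlgebra Q) :
    ⁅diagonalElement Z s, (1 : UniversalEnvelopingAlgebra k g) ⊗ₜ[k] c⁆ = 1 ⊗ₜ[k] ⁅s, c⁆ := by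
  simp only [diagonalElement, LieRing.of_associative_ring_bracket, add_mul, mul_add,
    Algebra.TensorProduct.tmul_mul_tmul, mul_one, one_mul, tmul_sub]
  abel

theorem IsDualFrame.lie_sum_ι_tmul_ι (h : IsDualFrame B W y yd) (hB : B.IsSymm)
    (hinv : B.lieInvariant g) (hW : W ∈ (LieAlgebra.ad k g Z).invtSubmodule)
    {s : CliffordAlgebra Q} (hs : ∀ X, ⁅s, ι Q X⁆ = ι Q ⁅Z, X⁆) :
    ⁅diagonalElement Z s, ∑ i, UniversalEnvelopingAlgebra.ι k (y i) ⊗ₜ[k] ι Q (yd i)⁆ = 0 := by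
  let φ : g →ₗ[k] UniversalEnvelopingAlgebra k g ⊗[k] CliffordAlgebra Q :=
    Algebra.TensorProduct.includeLeft.toLinearMap ∘ₗ
      (UniversalEnvelopingAlgebra.ι k).toLinearMap
  let ψ : g →ₗ[k] UniversalEnvelopingAlgebra k g ⊗[k] CliffordAlgebra Q :=
    Algebra.TensorProduct.includeRight.toLinearMap ∘ₗ ι Q
  have tmul_eq : ∀ X Y, UniversalEnvelopingAlgebra.ι k X ⊗ₜ[k] ι Q Y = φ X * ψ Y := fun X Y => by
    simp [φ, ψ]
  have hψ : ∀ Y, ⁅diagonalElement Z s, ψ Y⁆ = ψ ⁅Z, Y⁆ := fun Y =>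
    (lie_diagonalElement_one_tmul s (ι Q Y)).trans (by rw [hs]; rfl)
  simp only [tmul_eq]
  exact h.lie_sum_mul_eq_zero hB (isSkewAdjoint_ad hinv Z) hW
    (lie_diagonalElement_ι_tmul_one s) hψ

/-- The Dirac operator of a frame `y`, `yd` with an arbitrary coefficient `c` on its cubic term.
Kostant's `D_{𝔤/𝔥}` is the case `c = 2 * (-1/24)`, with `p` the projection onto `𝔭`. -/
def diracOperator (Q : QuadraticForm k g) (y yd : I → g) (p : Module.End k g) (c : k) :
    UniversalEnvelopingAlgebra k g ⊗[k] CliffordAlgebra Q :=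
  ∑ i, UniversalEnvelopingAlgebra.ι k (y i) ⊗ₜ ι Q (yd i) + 1 ⊗ₜ (c • cubicElement Q y yd p)

theorem kostant_dirac_equivariant_general [Invertible (4 : k)] (hB : B.IsSymm)
    (hinv : B.lieInvariant g) (hQ : ∀ X, Q X = B X X) {H : Submodule k g} {p : Module.End k g}
    (hpP : ∀ Y ∈ B.orthogonal H, p Y = Y) (hpH : ∀ X ∈ H, p X = 0)
    {J : Type*} [Fintype J] [DecidableEq J] {x xd : J → g} (hx : ∀ j, x j ∈ H)
    (hxd : ∀ j, xd j ∈ H) (hxdual : ∀ i j, B (xd i) (x j) = if i = j then 1 else 0)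
    [DecidableEq I] (hy : ∀ i, y i ∈ B.orthogonal H) (hyd : ∀ i, yd i ∈ B.orthogonal H)
    (hydual : ∀ i j, B (yd i) (y j) = if i = j then 1 else 0)
    (hspan : Submodule.span k (Set.range (Sum.elim x y)) = ⊤) (c : k)
    (hZ : ∀ X ∈ H, ⁅Z, X⁆ ∈ H) :
    Commute (diagonalElement Z (spinLift Q (Sum.elim x y) (Sum.elim xd yd) Z))
      (diracOperator Q y yd p c) := by
  have hdual : ∀ u v, B (Sum.elim xd yd u) (Sum.elim x y v) = if u = v then 1 else 0 := by
    rintro (i | i) (j | j)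
    · simp [hxdual]
    · simpa using hy j _ (hxd i)
    · simpa [hB.eq (yd i)] using hyd i _ (hx j)
    · simp [hydual]
  have hframe : IsDualFrame B ⊤ (Sum.elim x y) (Sum.elim xd yd) := .of_span_eq_top hdual hspan
  have hframeP : IsDualFrame B (B.orthogonal H) y yd :=
    hframe.of_sumElim hy hyd fun j Y hY => hY _ (hxd j)
  have hHP : Codisjoint H (B.orthogonal H) := by
    rw [codisjoint_iff_le_sup, ← hspan, Submodule.span_le]
    rintro _ ⟨j | i, rfl⟩
    exacts [Submodule.mem_sup_left (hx j), Submodule.mem_sup_right (hy i)]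
  have hP : B.orthogonal H ∈ (LieAlgebra.ad k g Z).invtSubmodule :=
    orthogonal_mem_invtSubmodule_of_isSkewAdjoint (isSkewAdjoint_ad hinv Z) hZ
  have hs := hframe.lie_spinLift_ι hB hinv hQ Z
  rw [commute_iff_lie_eq, diracOperator, lie_add, hframeP.lie_sum_ι_tmul_ι hB hinv hP hs,
    lie_diagonalElement_one_tmul, LieAlgebra.lie_smul,
    hframeP.lie_cubicElement hB hinv hP (commute_of_mem_invtSubmodule hHP hpH hpP hZ hP) hs,
    smul_zero, tmul_zero, add_zero]

end Dirac

end Commutators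

/-- Kostant's cubic Dirac operator is `𝔥`-equivariant: for every `Z ∈ 𝔥`,
`ρ(Z) · D_{𝔤/𝔥} = D_{𝔤/𝔥} · ρ(Z)` in `A = U(𝔤) ⊗ Cl(𝔤)`, where
`ρ(Z) = ιU(Z) ⊗ 1 + 1 ⊗ ads Z` and `ads` is the spin lift of the adjoint action of `𝔤`
built from the combined basis. -/
theorem kostant_dirac_equivariant
    {k : Type*} [Field k] [CharZero k]
    {g : Type*} [LieRing g] [LieAlgebra k g]
    (B : LinearMap.BilinForm k g)
    (hsymm : ∀ X Y : g, B X Y = B Y X)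
    (hnondeg : B.Nondegenerate)
    (hinv : ∀ X Y Z : g, B ⁅X, Y⁆ Z = B X ⁅Y, Z⁆)
    (H : LieSubalgebra k g) (P : Submodule k g)
    (hHnd : ∀ Z ∈ H, (∀ W ∈ H, B Z W = 0) → Z = 0)
    (hP : P = B.orthogonal H.toSubmodule)
    (hcompl : IsCompl H.toSubmodule P)
    (pp : g →ₗ[k] g)
    (hpp_mem : ∀ X : g, pp X ∈ P)
    (hpp_P : ∀ Y ∈ P, pp Y = Y)
    (hpp_H : ∀ Z ∈ H, pp Z = 0)
    {A' : Type*} [Fintype A'] [DecidableEq A']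
    (bh : A' → g) (hbh : ∀ a, bh a ∈ H)
    (bhd : A' → g) (hbhd : ∀ a, bhd a ∈ H)
    (hdualh : ∀ a c, B (bhd a) (bh c) = if a = c then 1 else 0)
    {I : Type*} [Fintype I] [DecidableEq I]
    (bp : I → g) (hbp : ∀ i, bp i ∈ P)
    (bpd : I → g) (hbpd : ∀ i, bpd i ∈ P)
    (hdualp : ∀ i j, B (bpd i) (bp j) = if i = j then 1 else 0)
    (hindep : LinearIndependent k (Sum.elim bh bp))
    (hspan : Submodule.span k (Set.range (Sum.elim bh bp)) = ⊤)
    (Q : QuadraticForm k g) (hQ : ∀ X : g, Q X = B X X)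
    (ads : g → CliffordAlgebra Q)
    (hads : ∀ X : g, ads X = (-(1/4 : k)) • ∑ u : A' ⊕ I,
        ι Q (Sum.elim bhd bpd u) * ι Q ⁅X, Sum.elim bh bp u⁆)
    (γp : CliffordAlgebra Q)
    (hγp : γp = (-(1/24 : k)) • ∑ i, ∑ j,
        ι Q (bpd i) * ι Q (bpd j) * ι Q (pp ⁅bp i, bp j⁆))
    (Dgh : UniversalEnvelopingAlgebra k g ⊗[k] CliffordAlgebra Q)
    (hDgh : Dgh = (∑ i, UniversalEnvelopingAlgebra.ι k (bp i) ⊗ₜ[k] ι Q (bpd i))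
              + (1 : UniversalEnvelopingAlgebra k g) ⊗ₜ[k] ((2 : k) • γp)) :
    ∀ Z ∈ H,
      (UniversalEnvelopingAlgebra.ι k Z ⊗ₜ[k] (1 : CliffordAlgebra Q)
        + (1 : UniversalEnvelopingAlgebra k g) ⊗ₜ[k] ads Z) * Dgh
      = Dgh * (UniversalEnvelopingAlgebra.ι k Z ⊗ₜ[k] (1 : CliffordAlgebra Q)
        + (1 : UniversalEnvelopingAlgebra k g) ⊗ₜ[k] ads Z) := by
  let _ : Invertible (4 : k) := invertibleOfNonzero (by norm_num)
  subst hP hγp hDgh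
  simpa only [Commute, SemiconjBy, diagonalElement, spinLift, diracOperator, cubicElement_eq_sum,
    cliffordOfEnd_apply, LieAlgebra.ad_apply, invOf_eq_inv, ← one_div, mul_smul, hads] using
    fun Z hZ => kostant_dirac_equivariant_general ⟨hsymm⟩ (lieInvariant_of_apply_lie_eq hinv) hQ
      hpp_P hpp_H hbh hbhd hdualh hbp hbpd hdualp hspan (2 * -(1 / 24))
      (fun X (hX : X ∈ H) => H.lie_mem (x := Z) hZ hX)
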